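/- Let R be a unital ring with involution, let a, b ∈ R, let x be a core inverse of a, and let g be a group inverse of a (a g a = a, g a g = g, a g = g a). If a is below b in the core partial order (i.e. x a = x b and a x = b x), then a is below b in the sharp partial order (g a = g b and a g = b g) if and only if a b = b a. -/

import Mathlib

/-- `x` is a core inverse of `a` in a unital `*`-ring:
`a x a = a`, `x a x = x`, `(a x)* = a x`, `x a² = a`, `a x² = x`. -/
def IsCoreInverse {R : Type*} [Ring R] [StarRing R] (a x : R) : Prop :=
  a * x * a = a ∧ x * a * x = x ∧ star (a * x) = a * x ∧ x * a ^ 2 = a ∧ a * x ^ 2 = x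

/-!
An element and its group inverse are left and right multiples of each other, so `g` may be replaced
by `a` in the sharp order: `g a = g b` means `a² = a b`, and `a g = b g` means `a² = b a`.
The core order `a x = b x` already forces `a² = b a`, because `a` is a right multiple of `x`.
What remains of the sharp order is `a² = a b`, that is, `b a = a b`.
-/

section Semigroup

variable {S : Type*} [Semigroup S] {a b c x g : S}

/-- `g` is a group inverse of `a`: an inner and outer inverse that commutes with `a`. As no
unit is involved, it is defined in any semigroup. -/
structure IsGroupInverse (a g : S) : Prop where
  mul_inv_mul : a * g * a = a
  inv_mul_inv : g * a * g = g
  commute : Commute a g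

namespace IsGroupInverse

theorem symm (hg : IsGroupInverse a g) : IsGroupInverse g a :=
  ⟨hg.inv_mul_inv, hg.mul_inv_mul, hg.commute.symm⟩

theorem op (hg : IsGroupInverse a g) : IsGroupInverse (MulOpposite.op a) (MulOpposite.op g) where
  mul_inv_mul := by simp only [← MulOpposite.op_mul, ← mul_assoc, hg.mul_inv_mul]
  inv_mul_inv := by simp only [← MulOpposite.op_mul, ← mul_assoc, hg.inv_mul_inv]
  commute := hg.commute.op

theorem mul_self_mul_inv (hg : IsGroupInverse a g) : a * a * g = a := by
  rw [mul_assoc, hg.commute.eq, ← mul_assoc, hg.mul_inv_mul]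

theorem mul_left_eq_of_inv_mul_left_eq (hg : IsGroupInverse a g) (h : g * b = g * c) :
    a * b = a * c :=
  calc
    a * b = a * a * (g * b) := by rw [← mul_assoc, hg.mul_self_mul_inv]
    _ = a * a * (g * c) := by rw [h]
    _ = a * c := by rw [← mul_assoc, hg.mul_self_mul_inv]

theorem inv_mul_left_eq_iff (hg : IsGroupInverse a g) : g * b = g * c ↔ a * b = a * c :=
  ⟨hg.mul_left_eq_of_inv_mul_left_eq, hg.symm.mul_left_eq_of_inv_mul_left_eq⟩

theorem inv_mul_right_eq_iff (hg : IsGroupInverse a g) : b * g = c * g ↔ b * a = c * a := by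
  simpa only [← MulOpposite.op_mul, MulOpposite.op_inj] using
    hg.op.inv_mul_left_eq_iff (b := MulOpposite.op b) (c := MulOpposite.op c)

end IsGroupInverse

theorem mul_right_eq_of_dvd (hdvd : x ∣ c) (h : a * x = b * x) : a * c = b * c := by
  obtain ⟨d, rfl⟩ := hdvd
  rw [← mul_assoc, h, mul_assoc]

theorem core_le_sharp_iff_comm_general (hg : IsGroupInverse a g) (hdvd : x ∣ a)
    (hle : a * x = b * x) : (g * a = g * b ∧ a * g = b * g) ↔ a * b = b * a := by
  have sq_eq : a * a = b * a := mul_right_eq_of_dvd hdvd hle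
  rw [hg.inv_mul_left_eq_iff, hg.inv_mul_right_eq_iff, and_iff_left sq_eq, sq_eq, eq_comm]

end Semigroup

theorem IsCoreInverse.dvd {R : Type*} [Ring R] [StarRing R] {a x : R} (hx : IsCoreInverse a x) :
    x ∣ a :=
  have ⟨_, _, _, x_mul_sq, _⟩ := hx
  ⟨a ^ 2, x_mul_sq.symm⟩

theorem core_le_sharp_iff_comm {R : Type*} [Ring R] [StarRing R] (a b x g : R)
    (hx : IsCoreInverse a x)
    (hg1 : a * g * a = a) (hg2 : g * a * g = g) (hg3 : a * g = g * a)
    (hle : x * a = x * b ∧ a * x = b * x) :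
    (g * a = g * b ∧ a * g = b * g) ↔ a * b = b * a :=
  core_le_sharp_iff_comm_general ⟨hg1, hg2, hg3⟩ hx.dvd hle.2
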